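/- Let H be a hypothesis class of functions X → {0,1} with |H| ≥ k for some integer k ≥ 1, and assume every pair of distinct hypotheses differs on some point. Then there exists a finite full binary tree T labeled by X, shattered by H (every branch realizable by some h ∈ H), such that E_T ≥ 2 − 2^{2−k}. -/

import Mathlib

/-- Finite full rooted ordered binary trees with internal nodes labeled by `X`. -/
inductive BTree (X : Type) : Type
  | leaf : BTree X
  | node : X → BTree X → BTree X → BTree X

namespace BTree

variable {X : Type}

/-- The branches (root-to-leaf paths) of a tree, each recorded as the list of
edge labels (`false` = left/0, `true` = right/1) along the path. -/
def branches : BTree X → List (List Bool)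
  | leaf => [[]]
  | node _ l r => (branches l).map (List.cons false) ++ (branches r).map (List.cons true)

/-- The expected length of a uniformly random branch:
`E T = ∑_{b ∈ B(T)} |b| · 2^{-|b|}`. -/
noncomputable def E (t : BTree X) : ℝ :=
  ((branches t).map (fun b => (b.length : ℝ) * (2 : ℝ) ^ (-(b.length : ℤ)))).sum

/-- The internal-node positions of the tree, as paths from the root. -/
def nodePaths : BTree X → List (List Bool)
  | leaf => []
  | node _ l r =>
      [] :: ((nodePaths l).map (List.cons false) ++ (nodePaths r).map (List.cons true))

/-- `w` is a weight function for `t`: at every internal node, the two outgoing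
edges get nonnegative weights summing to `1`. -/
def IsWeightFn (t : BTree X) (w : List Bool → Bool → ℝ) : Prop :=
  ∀ p ∈ nodePaths t, 0 ≤ w p false ∧ 0 ≤ w p true ∧ w p false + w p true = 1

/-- The total weight of a branch `b`: the sum of the weights of its edges. -/
def branchWeight (w : List Bool → Bool → ℝ) (b : List Bool) : ℝ :=
  ((List.range b.length).map (fun i => w (b.take i) (b.getD i false))).sum

/-- The subtree of `t` rooted at the end of the path `p` (junk value `leaf`
if the path leaves the tree). -/
def subtreeAt : BTree X → List Bool → BTree X
  | t, [] => t
  | leaf, _ :: _ => leaf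
  | node _ l r, d :: p => subtreeAt (if d then r else l) p

/-- A tree is quasi-balanced if some weight function gives all branches the
same total weight `E T / 2`. -/
def QuasiBalanced (t : BTree X) : Prop :=
  ∃ w : List Bool → Bool → ℝ, IsWeightFn t w ∧ ∀ b ∈ branches t, branchWeight w b = E t / 2

/-- A tree is monotone if every subtree's expected branch length is at least
that of each of its immediate subtrees. -/
def IsMonotone : BTree X → Prop
  | leaf => True
  | node x l r =>
      E l ≤ E (node x l r) ∧ E r ≤ E (node x l r) ∧ IsMonotone l ∧ IsMonotone r

/-- The minimum length of a branch of the tree. -/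
def minBranch : BTree X → ℕ
  | leaf => 0
  | node _ l r => 1 + min (minBranch l) (minBranch r)

/-- The sequence of labeled examples along the path `p`: at a node labeled `x`,
following the edge labeled `d` produces the example `(x, d)`. -/
def examplesAlong : BTree X → List Bool → List (X × Bool)
  | leaf, _ => []
  | node _ _ _, [] => []
  | node x l r, d :: p => (x, d) :: examplesAlong (if d then r else l) p

end BTree

/-- `T` is shattered by `H`: every branch of `T` is realizable by some
hypothesis in `H`. -/
def Shattered {X : Type} (H : Set (X → Bool)) (T : BTree X) : Prop :=
  ∀ b ∈ BTree.branches T, ∃ h ∈ H,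
    ∀ e ∈ BTree.examplesAlong T b, h e.1 = e.2

/-!
Two distinct hypotheses disagree at some point `x`, which splits a class of `m + n` hypotheses into
nonempty classes of sizes `m` and `n`. Put `x` at the root, above trees for the two parts. The
expected branch length of a tree is one more than the average of those of its two subtrees, so the
bound for `m + n` follows from the bounds for `m` and `n` by
`(1 - 2 ^ (1 - m)) * (1 - 2 ^ (1 - n)) ≥ 0`.
-/

lemma two_zpow_neg_length_cons {α : Type*} (a : α) (l : List α) :
    (2 : ℝ) ^ (-((a :: l).length : ℤ)) = 2⁻¹ * 2 ^ (-(l.length : ℤ)) := by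
  rw [List.length_cons, Nat.cast_succ, neg_add_rev, zpow_add₀ two_ne_zero, zpow_neg_one]

namespace BTree

variable {X : Type}

lemma sum_branches_two_zpow_neg_length (t : BTree X) :
    ((branches t).map fun b => (2 : ℝ) ^ (-(b.length : ℤ))).sum = 1 := by
  induction t with
  | leaf => simp [branches]
  | node x l r ihl ihr =>
    simp only [branches, List.map_append, List.sum_append, List.map_map, Function.comp_def,
      two_zpow_neg_length_cons, List.sum_map_mul_left, ihl, ihr]
    norm_num

@[simp]
lemma E_leaf : E (leaf : BTree X) = 0 := by
  simp [E, branches]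

lemma sum_branches_length_cons_mul_two_zpow (d : Bool) (t : BTree X) :
    ((branches t).map fun b =>
      ((d :: b).length : ℝ) * (2 : ℝ) ^ (-((d :: b).length : ℤ))).sum = (E t + 1) / 2 := by
  have summand_eq (b : List Bool) :
      ((d :: b).length : ℝ) * (2 : ℝ) ^ (-((d :: b).length : ℤ)) =
        2⁻¹ * ((b.length : ℝ) * 2 ^ (-(b.length : ℤ)) + 2 ^ (-(b.length : ℤ))) := by
    rw [two_zpow_neg_length_cons, List.length_cons, Nat.cast_succ]
    ring
  simp only [summand_eq, List.sum_map_mul_left, List.sum_map_add,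
    sum_branches_two_zpow_neg_length]
  rw [E, inv_mul_eq_div]

lemma E_node (x : X) (l r : BTree X) : E (node x l r) = 1 + (E l + E r) / 2 := by
  rw [E, branches, List.map_append, List.sum_append, List.map_map, List.map_map]
  simp only [Function.comp_def, sum_branches_length_cons_mul_two_zpow]
  ring

end BTree

namespace Shattered

variable {X : Type} {H K : Set (X → Bool)}

lemma mono {T : BTree X} (hT : Shattered H T) (hHK : H ⊆ K) : Shattered K T := fun b hb =>
  let ⟨h, hh, hreal⟩ := hT b hb
  ⟨h, hHK hh, hreal⟩

lemma leaf_iff : Shattered H BTree.leaf ↔ H.Nonempty := by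
  simp [Shattered, BTree.branches, BTree.examplesAlong, Set.Nonempty]

lemma node_iff {x : X} {l r : BTree X} :
    Shattered H (BTree.node x l r) ↔
      Shattered {h ∈ H | h x = false} l ∧ Shattered {h ∈ H | h x = true} r := by
  simp only [Shattered, BTree.branches, BTree.examplesAlong, List.mem_append, List.mem_map, or_imp,
    forall_and, forall_exists_index, and_imp, forall_apply_eq_imp_iff₂, List.forall_mem_cons,
    Set.mem_ofPred_eq, and_assoc, if_true, Bool.false_eq_true, if_false]

end Shattered

lemma exists_forall_exists_eval_eq {X : Type*} {H : Set (X → Bool)} (hH : H.Nontrivial) :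
    ∃ x, ∀ b, ∃ h ∈ H, h x = b := by
  obtain ⟨f, hf, g, hg, hfg⟩ := hH
  obtain ⟨x, hx⟩ := Function.ne_iff.mp hfg
  refine ⟨x, fun b => ?_⟩
  obtain hfb | hfb := Bool.eq_or_eq_not (f x) b
  · exact ⟨f, hf, hfb⟩
  · exact ⟨g, hg, Bool.ne_not.mp (hfb ▸ hx.symm)⟩

lemma two_sub_two_zpow_add_le {m n : ℤ} (hm : 1 ≤ m) (hn : 1 ≤ n) :
    2 - (2 : ℝ) ^ (2 - (m + n)) ≤ 1 + ((2 - 2 ^ (2 - m)) + (2 - 2 ^ (2 - n))) / 2 := by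
  have two_zpow_le_one {j : ℤ} (hj : 1 ≤ j) : (2 : ℝ) ^ (1 - j) ≤ 1 :=
    zpow_le_one_of_nonpos₀ one_le_two (sub_nonpos.mpr hj)
  have two_zpow_two_sub (j : ℤ) : (2 : ℝ) ^ (2 - j) = 2 * 2 ^ (1 - j) := by
    rw [← zpow_one_add₀ two_ne_zero]
    ring_nf
  have two_zpow_two_sub_add : (2 : ℝ) ^ (2 - (m + n)) = 2 ^ (1 - m) * 2 ^ (1 - n) := by
    rw [← zpow_add₀ two_ne_zero]
    ring_nf
  have := mul_nonneg (sub_nonneg.mpr (two_zpow_le_one hm)) (sub_nonneg.mpr (two_zpow_le_one hn))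
  rw [two_zpow_two_sub_add, two_zpow_two_sub, two_zpow_two_sub]
  linarith

theorem exists_shattered_two_sub_two_zpow_card_le_E {X : Type} (H : Finset (X → Bool))
    (hH : H.Nonempty) :
    ∃ T : BTree X, Shattered (H : Set (X → Bool)) T ∧
      2 - (2 : ℝ) ^ (2 - (H.card : ℤ)) ≤ BTree.E T := by
  induction H using Finset.strongInduction with
  | H H ih =>
  obtain ⟨f, rfl⟩ | hH' := hH.exists_eq_singleton_or_nontrivial
  · exact ⟨BTree.leaf, Shattered.leaf_iff.mpr (by simp), by simp⟩
  obtain ⟨x, hx⟩ := exists_forall_exists_eval_eq hH'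
  have part_nonempty (b : Bool) : {h ∈ H | h x = b}.Nonempty :=
    Finset.filter_nonempty_iff.mpr (hx b)
  have one_le_card_part (b : Bool) : (1 : ℤ) ≤ {h ∈ H | h x = b}.card :=
    mod_cast (part_nonempty b).card_pos
  have part_ssubset (b : Bool) : {h ∈ H | h x = b} ⊂ H := by
    obtain ⟨h, hh, hhx⟩ := hx (!b)
    exact Finset.filter_ssubset.mpr ⟨h, hh, by simp [hhx]⟩
  have card_eq : H.card = {h ∈ H | h x = false}.card + {h ∈ H | h x = true}.card := by
    simpa only [Bool.not_eq_false] using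
      (H.card_filter_add_card_filter_not fun h => h x = false).symm
  obtain ⟨l, hl, hlE⟩ := ih _ (part_ssubset false) (part_nonempty false)
  obtain ⟨r, hr, hrE⟩ := ih _ (part_ssubset true) (part_nonempty true)
  rw [Finset.coe_filter] at hl hr
  refine ⟨BTree.node x l r, Shattered.node_iff.mpr ⟨hl, hr⟩, ?_⟩
  rw [BTree.E_node, card_eq, Nat.cast_add]
  refine (two_sub_two_zpow_add_le (one_le_card_part false) (one_le_card_part true)).trans ?_
  gcongr

theorem exists_shattered_tree_of_card_ge_general {X : Type} (k : ℕ) (hk : 1 ≤ k)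
    (H : Set (X → Bool)) (hcard : (k : ℕ∞) ≤ H.encard) :
    ∃ T : BTree X, Shattered H T ∧ 2 - (2 : ℝ) ^ ((2 : ℤ) - (k : ℤ)) ≤ BTree.E T := by
  obtain ⟨K, hKH, hK⟩ := Set.exists_subset_encard_eq hcard
  lift K to Finset (X → Bool) using Set.finite_of_encard_eq_coe hK
  obtain rfl : K.card = k := by simpa using hK
  obtain ⟨T, hT, hE⟩ := exists_shattered_two_sub_two_zpow_card_le_E K (Finset.card_pos.mp hk)
  exact ⟨T, hT.mono hKH, hE⟩

/-- If `|H| ≥ k` (with `k ≥ 1`), then there is a tree shattered by `H` with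
expected branch length at least `2 - 2^{2-k}`. -/
theorem exists_shattered_tree_of_card_ge {X : Type} (k : ℕ) (hk : 1 ≤ k)
    (H : Finset (X → Bool)) (hcard : k ≤ H.card) :
    ∃ T : BTree X, Shattered (↑H : Set (X → Bool)) T ∧
      2 - (2 : ℝ) ^ ((2 : ℤ) - (k : ℤ)) ≤ BTree.E T := by
  exact exists_shattered_tree_of_card_ge_general k hk (H : Set (X → Bool)) (by simpa using hcard)
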